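/- Let C = ⟨(b|0), (ℓ | fh + 2f)⟩ be a Z_2Z_4-additive cyclic code of type (α, β; γ, δ; κ) with fhg = x^β - 1, β odd. Then γ = α - deg(b) + deg(h), δ = deg(g), and κ = α - deg(gcd(ℓg, b)). -/

import Mathlib

open Polynomial

/-- Reduction modulo 2, `Z₄[x] → Z₂[x]`. -/
noncomputable def red42 : Polynomial (ZMod 4) →+* Polynomial (ZMod 2) :=
  Polynomial.mapRingHom (ZMod.castHom (show 2 ∣ 4 by norm_num) (ZMod 2))

/-- The polynomial `∑ uᵢ xⁱ` associated to a binary vector. -/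
noncomputable def polyOf2 {α : ℕ} (u : Fin α → ZMod 2) : Polynomial (ZMod 2) :=
  ∑ i, C (u i) * X ^ (i : ℕ)

/-- The polynomial `∑ u'ⱼ xʲ` associated to a quaternary vector. -/
noncomputable def polyOf4 {β : ℕ} (u : Fin β → ZMod 4) : Polynomial (ZMod 4) :=
  ∑ j, C (u j) * X ^ (j : ℕ)

/-- Membership in the `Z₂Z₄`-additive cyclic code `C = ⟨(b|0), (ℓ|fh+2f)⟩`. -/
def memC {α β : ℕ} (b ℓ : Polynomial (ZMod 2)) (q : Polynomial (ZMod 4))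
    (z : (Fin α → ZMod 2) × (Fin β → ZMod 4)) : Prop :=
  ∃ lam mu : Polynomial (ZMod 4),
    (X ^ α - 1 : Polynomial (ZMod 2)) ∣
        polyOf2 z.1 - (red42 lam * b + red42 mu * ℓ) ∧
    (X ^ β - 1 : Polynomial (ZMod 4)) ∣ polyOf4 z.2 - mu * q

theorem nt4 : Nontrivial (ZMod 4) := ⟨0, 1, by decide⟩


noncomputable def polyG {R : Type*} [CommRing R] {n : ℕ} (u : Fin n → R) : Polynomial R :=
  ∑ i, C (u i) * X ^ (i : ℕ)

theorem polyG_coeff {R : Type*} [CommRing R] {n : ℕ} (u : Fin n → R) (i : Fin n) :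
    (polyG u).coeff i = u i := by
  simp only [polyG, finsetSum_coeff, coeff_C_mul, coeff_X_pow]
  rw [Finset.sum_eq_single i]
  · simp
  · intro j _ hj
    have : (i : ℕ) ≠ j := fun h => hj (Fin.ext h.symm)
    simp [this]
  · simp

theorem polyG_degree {R : Type*} [CommRing R] {n : ℕ} (u : Fin n → R) :
    (polyG u).degree < n := by
  rw [Polynomial.degree_lt_iff_coeff_zero]
  intro m hm
  simp only [polyG, finsetSum_coeff, coeff_C_mul, coeff_X_pow]
  apply Finset.sum_eq_zero
  intro j _
  have : m ≠ j := by have := j.2; omega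
  simp [this]

theorem polyG_sub {R : Type*} [CommRing R] {n : ℕ} (u v : Fin n → R) :
    polyG (u - v) = polyG u - polyG v := by
  simp [polyG, sub_mul, Finset.sum_sub_distrib]

theorem polyG_add {R : Type*} [CommRing R] {n : ℕ} (u v : Fin n → R) :
    polyG (u + v) = polyG u + polyG v := by
  simp [polyG, add_mul, Finset.sum_add_distrib]

theorem polyG_eq_zero {R : Type*} [CommRing R] [Nontrivial R] {n : ℕ} (P : Polynomial R)
    (hP : P.Monic) (hn : P.natDegree = n) (u : Fin n → R) (h : P ∣ polyG u) : u = 0 := by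
  have h0 : polyG u = 0 := by
    by_contra hne
    refine hP.not_dvd_of_degree_lt hne ?_ h
    rw [degree_eq_natDegree hP.ne_zero, hn]
    exact polyG_degree u
  funext i
  rw [← polyG_coeff u i, h0]; simp

theorem polyG_exists {R : Type*} [CommRing R] [Nontrivial R] {n : ℕ} (P : Polynomial R)
    (hP : P.Monic) (hn : P.natDegree = n) (p : Polynomial R) :
    ∃ u : Fin n → R, P ∣ polyG u - p := by
  refine ⟨fun i => (p %ₘ P).coeff i, ?_⟩
  have : polyG (fun i : Fin n => (p %ₘ P).coeff i) = p %ₘ P := by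
    ext m
    by_cases hm : m < n
    · exact polyG_coeff (fun i : Fin n => (p %ₘ P).coeff i) ⟨m, hm⟩
    · push Not at hm
      have h1 := (polyG_degree (fun i : Fin n => (p %ₘ P).coeff i))
      rw [Polynomial.degree_lt_iff_coeff_zero] at h1
      rw [h1 m hm]
      have h2 := degree_modByMonic_lt p hP
      rw [degree_eq_natDegree hP.ne_zero, hn, Polynomial.degree_lt_iff_coeff_zero] at h2
      rw [h2 m hm]
  rw [this]
  have h3 := modByMonic_add_div p P
  refine ⟨-(p /ₘ P), ?_⟩
  linear_combination h3

theorem red42_surj : Function.Surjective red42 := by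
  unfold red42
  exact Polynomial.map_surjective _ (ZMod.castHom_surjective _)

theorem red42_two_mul (p : Polynomial (ZMod 4)) : red42 (2 * p) = 0 := by
  rw [map_mul]
  have : red42 2 = 0 := by
    rw [map_ofNat]; exact CharTwo.two_eq_zero
  rw [this, zero_mul]

theorem four_zero : (4 : Polynomial (ZMod 4)) = 0 := by
  have : (4 : Polynomial (ZMod 4)) = C (4 : ZMod 4) := (map_ofNat C 4).symm
  rw [this]
  have : (4 : ZMod 4) = 0 := by decide
  rw [this, C_0]

theorem zmod4_half (x : ZMod 4) (h : (ZMod.castHom (show 2 ∣ 4 by norm_num) (ZMod 2)) x = 0) :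
    ∃ y : ZMod 4, x = 2 * y := by
  revert x; decide

theorem zmod4_two (x : ZMod 4) (h : 2 * x = 0) :
    (ZMod.castHom (show 2 ∣ 4 by norm_num) (ZMod 2)) x = 0 := by
  revert x; decide

theorem red42_ker (p : Polynomial (ZMod 4)) (h : red42 p = 0) : ∃ q, p = 2 * q := by
  have h1 : C (2 : ZMod 4) ∣ p := by
    rw [Polynomial.C_dvd_iff_dvd_coeff]
    intro i
    apply zmod4_half
    have := congrArg (fun q => q.coeff i) h
    simpa [red42] using this
  obtain ⟨q, hq⟩ := h1
  exact ⟨q, by rw [hq]; rfl⟩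

theorem red42_of_two (p : Polynomial (ZMod 4)) (h : 2 * p = 0) : red42 p = 0 := by
  ext i
  have h2 : C (2 : ZMod 4) * p = 0 := h
  have := congrArg (fun q => q.coeff i) h2
  simp only [coeff_C_mul, coeff_zero] at this
  have := zmod4_two _ this
  simpa [red42] using this

theorem red42_monic {p : Polynomial (ZMod 4)} (h : p.Monic) : (red42 p).Monic := h.map _

theorem red42_natDegree {p : Polynomial (ZMod 4)} (h : p.Monic) :
    (red42 p).natDegree = p.natDegree := h.natDegree_map _

theorem two_dvd (p m : Polynomial (ZMod 4)) (hp : p.Monic) (h : p ∣ 2 * m) :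
    ∃ k c, m = p * k + 2 * c := by
  obtain ⟨k, hk⟩ := h
  have h1 : red42 p * red42 k = 0 := by rw [← map_mul, ← hk, red42_two_mul]
  have h2 : red42 k = 0 := (mul_eq_zero.1 h1).resolve_left (red42_monic hp).ne_zero
  obtain ⟨k', hk'⟩ := red42_ker _ h2
  have h3 : red42 (m - p * k') = 0 := by
    apply red42_of_two
    rw [mul_sub, hk, hk']; ring
  obtain ⟨c, hc⟩ := red42_ker _ h3
  exact ⟨k', c, by rw [← hc]; ring⟩

theorem coprime_lift (p q : Polynomial (ZMod 4)) (h : IsCoprime (red42 p) (red42 q)) :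
    IsCoprime p q := by
  obtain ⟨u, v, huv⟩ := h
  obtain ⟨u, rfl⟩ := red42_surj u
  obtain ⟨v, rfl⟩ := red42_surj v
  have h3 : red42 (u * p + v * q - 1) = 0 := by simp [huv]
  obtain ⟨w, hw⟩ := red42_ker _ h3
  refine ⟨(1 - 2 * w) * u, (1 - 2 * w) * v, ?_⟩
  linear_combination (1 - 2 * w) * hw - w ^ 2 * four_zero

theorem coprime_hg (β : ℕ) (hβ : Odd β) (f g h : Polynomial (ZMod 4))
    (hfac : f * h * g = X ^ β - 1) : IsCoprime (red42 h) (red42 g) := by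
  have hs : (X ^ β - 1 : Polynomial (ZMod 2)).Separable := by
    have hu : IsUnit ((β : ZMod 2)) := by
      rw [(ZMod.natCast_eq_one_iff_odd).2 hβ]; exact isUnit_one
    exact (X_pow_sub_one_separable_iff).2 hu.ne_zero
  have h1 : red42 f * red42 h * red42 g = X ^ β - 1 := by
    rw [← map_mul, ← map_mul, hfac]; simp [red42]
  rw [← h1] at hs
  exact IsCoprime.of_mul_left_right hs.isCoprime

theorem dvd_cancel {R : Type*} [CommRing R] {p a c : Polynomial R} (hp : p.Monic)
    (h : p * a ∣ p * c) : a ∣ c := by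
  obtain ⟨k, hk⟩ := h
  exact ⟨k, hp.isRegular.left (by simp only [hk, mul_assoc])⟩

/-- annihilator of the quaternary generator -/
theorem key_ann (β : ℕ) (hβ : Odd β) (f g h : Polynomial (ZMod 4)) (hf : f.Monic) (hg : g.Monic)
    (hh : h.Monic) (hfac : f * h * g = X ^ β - 1) (m : Polynomial (ZMod 4))
    (hm : (X ^ β - 1) ∣ m * (f * h + 2 * f)) : ∃ k c, m = g * (h * k + 2 * c) := by
  rw [← hfac] at hm
  have h1 : h * g ∣ m * (h + 2) := by
    apply dvd_cancel hf
    convert hm using 1 <;> ring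
  have hc : IsCoprime g (h + 2) := by
    apply (coprime_lift _ _ _).symm
    have : red42 (h + 2) = red42 h := by
      have := red42_two_mul 1
      rw [mul_one] at this
      rw [map_add, this, add_zero]
    rw [this]; exact coprime_hg β hβ f g h hfac
  obtain ⟨v, hv⟩ := hc.dvd_of_dvd_mul_right ((dvd_mul_left g h).trans h1)
  have h2 : h ∣ v * (h + 2) := by
    apply dvd_cancel hg
    rw [hv] at h1
    convert h1 using 1 <;> ring
  have h3 : h ∣ 2 * v := by
    have := dvd_sub h2 (dvd_mul_left h v)
    convert this using 1; ring
  obtain ⟨k, c, hk⟩ := two_dvd h v hh h3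
  exact ⟨k, c, by rw [hv, hk]⟩

theorem tors_ann (β : ℕ) (f g h : Polynomial (ZMod 4)) (hf : f.Monic)
    (hh : h.Monic) (hfac : f * h * g = X ^ β - 1) (m : Polynomial (ZMod 4)) :
    (X ^ β - 1) ∣ 2 * (m * (f * h + 2 * f)) ↔ g ∣ 2 * m := by
  have e : 2 * (m * (f * h + 2 * f)) = f * h * (2 * m) := by
    linear_combination m * f * four_zero
  rw [← hfac, e]
  exact ⟨fun H => dvd_cancel (hf.mul hh) H, fun H => mul_dvd_mul_left _ H⟩

theorem card_tors4 (n : ℕ) : Nat.card {t : Fin n → ZMod 4 // t + t = 0} = 2 ^ n := by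
  have e : {t : Fin n → ZMod 4 // t + t = 0} ≃ (Fin n → {x : ZMod 4 // x + x = 0}) :=
    (Equiv.subtypeEquivRight (fun t => by simp [funext_iff])).trans
      (Equiv.subtypePiEquivPi (p := fun (_ : Fin n) (x : ZMod 4) => x + x = 0))
  rw [Nat.card_congr e, Nat.card_fun]
  have : Nat.card {x : ZMod 4 // x + x = 0} = 2 := by
    rw [Nat.card_eq_fintype_card]; decide
  rw [this, Nat.card_eq_fintype_card, Fintype.card_fin]

theorem zmod2_monic (p : Polynomial (ZMod 2)) (h : p ≠ 0) : p.Monic := by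
  have h1 : p.leadingCoeff ≠ 0 := by simpa using h
  have : ∀ x : ZMod 2, x ≠ 0 → x = 1 := by decide
  exact this _ h1

theorem addself2 {n : ℕ} (u : Fin n → ZMod 2) : u + u = 0 := by
  funext i
  exact CharTwo.add_self_eq_zero (u i)

theorem polyG_inj {R : Type*} [CommRing R] [Nontrivial R] {n : ℕ} (P : Polynomial R)
    (hP : P.Monic) (hn : P.natDegree = n) (u v : Fin n → R) (h : P ∣ polyG u - polyG v) :
    u = v := by
  rw [← polyG_sub] at h
  exact sub_eq_zero.1 (polyG_eq_zero P hP hn _ h)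

theorem XP_monic {R : Type*} [CommRing R] [Nontrivial R] {n : ℕ} (hn : 0 < n) :
    (X ^ n - 1 : Polynomial R).Monic := by
  simpa using monic_X_pow_sub_C (1 : R) hn.ne'

theorem XP_natDegree {R : Type*} [CommRing R] [Nontrivial R] {n : ℕ} :
    (X ^ n - 1 : Polynomial R).natDegree = n := by
  simpa using natDegree_X_pow_sub_C (n := n) (r := (1 : R))

/-- The explicit parametrization of the code. -/
theorem param (α β : ℕ) (hα : 0 < α) (hβ : Odd β)
    (f g h : Polynomial (ZMod 4)) (hf : f.Monic) (hg : g.Monic) (hh : h.Monic)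
    (hfac : f * h * g = X ^ β - 1)
    (b ℓ : Polynomial (ZMod 2)) (hb : b ∣ X ^ α - 1)
    (hdvd : b ∣ red42 (h * g) * ℓ) :
    ∃ Ψ : (Fin (α - b.natDegree) → ZMod 2) × (Fin g.natDegree → ZMod 4) ×
        (Fin h.natDegree → ZMod 2) ≃ {z : (Fin α → ZMod 2) × (Fin β → ZMod 4) //
        memC b ℓ (f * h + 2 * f) z}, ∀ x, (Ψ x).1 + (Ψ x).1 = 0 ↔ x.2.1 + x.2.1 = 0 := by
  have := nt4
  have hβ0 : 0 < β := hβ.pos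
  have mα : (X ^ α - 1 : Polynomial (ZMod 2)).Monic := XP_monic hα
  have mβ : (X ^ β - 1 : Polynomial (ZMod 4)).Monic := XP_monic hβ0
  have nα : (X ^ α - 1 : Polynomial (ZMod 2)).natDegree = α := XP_natDegree
  have nβ : (X ^ β - 1 : Polynomial (ZMod 4)).natDegree = β := XP_natDegree
  obtain ⟨E, hE⟩ := hb
  have hbE0 : b * E ≠ 0 := hE ▸ mα.ne_zero
  have mb : b.Monic := zmod2_monic _ (left_ne_zero_of_mul hbE0)
  have mE : E.Monic := zmod2_monic _ (right_ne_zero_of_mul hbE0)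
  have nE : E.natDegree = α - b.natDegree := by
    have := natDegree_mul mb.ne_zero mE.ne_zero
    rw [← hE, nα] at this; omega
  choose r2 hr2 using polyG_exists (X ^ α - 1 : Polynomial (ZMod 2)) mα nα
  choose r4 hr4 using polyG_exists (X ^ β - 1 : Polynomial (ZMod 4)) mβ nβ
  choose L hL using red42_surj
  set q := f * h + 2 * f with hq
  have gq : ∀ k c, (X ^ β - 1) ∣ g * (h * k + 2 * c) * q := by
    intro k c
    rw [← hfac, hq]
    refine ⟨h * k + 2 * k + 2 * c, ?_⟩
    linear_combination (c * g * f) * four_zero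
  let lm : (Fin (α - b.natDegree) → ZMod 2) × (Fin g.natDegree → ZMod 4) ×
        (Fin h.natDegree → ZMod 2) → Polynomial (ZMod 4) := fun x => L (polyG x.1)
  let mu : (Fin (α - b.natDegree) → ZMod 2) × (Fin g.natDegree → ZMod 4) ×
        (Fin h.natDegree → ZMod 2) → Polynomial (ZMod 4) :=
      fun x => polyG x.2.1 + g * L (polyG x.2.2)
  let F : (Fin (α - b.natDegree) → ZMod 2) × (Fin g.natDegree → ZMod 4) ×
        (Fin h.natDegree → ZMod 2) → {z : (Fin α → ZMod 2) × (Fin β → ZMod 4) //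
        memC b ℓ q z} := fun x =>
    ⟨(r2 (red42 (lm x) * b + red42 (mu x) * ℓ), r4 (mu x * q)),
      lm x, mu x, hr2 _, hr4 _⟩
  have hinj : Function.Injective F := by
    rintro ⟨s, t, r⟩ ⟨s', t', r'⟩ hF
    have hF1 := congrArg (fun z => polyG z.1.1) hF
    have hF2 := congrArg (fun z => polyG z.1.2) hF
    simp only [F, lm, mu] at hF1 hF2
    have d4 : (X ^ β - 1) ∣ (polyG t + g * L (polyG r) - (polyG t' + g * L (polyG r'))) * q := by
      have a1 := hr4 ((polyG t + g * L (polyG r)) * q)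
      have a2 := hr4 ((polyG t' + g * L (polyG r')) * q)
      rw [hF2] at a1
      have := dvd_sub a2 a1
      convert this using 1; ring
    obtain ⟨k, c, hkc⟩ := key_ann β hβ f g h hf hg hh hfac _ d4
    have ht : t = t' := by
      apply polyG_inj g hg rfl
      refine ⟨(h * k + 2 * c) - L (polyG r) + L (polyG r'), ?_⟩
      linear_combination hkc
    subst ht
    have hr : r = r' := by
      apply polyG_inj (red42 h) (red42_monic hh) (red42_natDegree hh)
      have e1 : g * (L (polyG r) - L (polyG r')) = g * (h * k + 2 * c) := by
        linear_combination hkc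
      have e2 := congrArg red42 (hg.isRegular.left e1)
      rw [map_sub, hL, hL, map_add, red42_two_mul, map_mul, add_zero] at e2
      exact ⟨_, e2⟩
    subst hr
    have hs : s = s' := by
      apply polyG_inj E mE nE
      apply dvd_cancel mb
      rw [← hE]
      have a1 := hr2 (red42 (L (polyG s)) * b + red42 (polyG t + g * L (polyG r)) * ℓ)
      have a2 := hr2 (red42 (L (polyG s')) * b + red42 (polyG t + g * L (polyG r)) * ℓ)
      rw [hF1] at a1
      have := dvd_sub a2 a1
      rw [hL, hL] at this
      convert this using 1; ring
    subst hs
    rfl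
  have hsurj : Function.Surjective F := by
    rintro ⟨⟨z1, z2⟩, lam, m, h1, h2⟩
    change _ ∣ polyG z1 - _ at h1
    change _ ∣ polyG z2 - _ at h2
    obtain ⟨t, m', ht⟩ := polyG_exists g hg rfl m
    obtain ⟨r, m2, hr⟩ := polyG_exists (red42 h) (red42_monic hh) (red42_natDegree hh)
      (red42 (-m'))
    obtain ⟨m2, rfl⟩ := red42_surj m2
    obtain ⟨d, hd⟩ := red42_ker (L (polyG r) - (-m') - h * m2) (by
      rw [map_sub, map_sub, map_mul, hL, hr, sub_self])
    obtain ⟨k, hk⟩ := hdvd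
    -- m - (polyG t + g * L r) = - g * (h m2 + 2 d)
    have hm : polyG t + g * L (polyG r) = m + g * (h * m2 + 2 * d) := by
      linear_combination ht + g * hd
    obtain ⟨s, hs⟩ := polyG_exists E mE nE (red42 lam - k * red42 m2)
    refine ⟨(s, t, r), ?_⟩
    apply Subtype.ext
    apply Prod.ext
    · simp only [F, lm, mu]
      apply polyG_inj _ mα nα
      have a1 := hr2 (red42 (L (polyG s)) * b + red42 (polyG t + g * L (polyG r)) * ℓ)
      have a2 := dvd_sub a1 h1
      have a3 : (X ^ α - 1) ∣ b * (polyG s - (red42 lam - k * red42 m2)) := by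
        rw [hE]; exact mul_dvd_mul_left _ hs
      have a4 := dvd_add a2 a3
      have e3 : red42 (polyG t + g * L (polyG r)) = red42 m + red42 (h * g) * red42 m2 := by
        rw [hm, map_add, map_mul, map_add, red42_two_mul, map_mul, map_mul]; ring
      rw [e3, hL] at a4
      rw [e3, hL]
      convert a4 using 1
      linear_combination red42 m2 * hk
    · simp only [F, mu]
      apply polyG_inj _ mβ nβ
      have a1 := hr4 ((polyG t + g * L (polyG r)) * q)
      have a2 := dvd_sub a1 h2
      have a4 := dvd_add a2 (gq m2 d)
      convert a4 using 1
      linear_combination q * hm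
  refine ⟨Equiv.ofBijective F ⟨hinj, hsurj⟩, ?_⟩
  rintro ⟨s, t, r⟩
  have a1 := hr4 ((polyG t + g * L (polyG r)) * q)
  set M := polyG t + g * L (polyG r) with hM
  have i1 : r4 (M * q) + r4 (M * q) = 0 ↔ (X ^ β - 1) ∣ 2 * (M * q) := by
    have a2 := Dvd.dvd.mul_left a1 2
    constructor
    · intro H
      have H2 := congrArg polyG H
      rw [polyG_add] at H2
      have z : polyG (0 : Fin β → ZMod 4) = 0 := by simp [polyG]
      rw [z] at H2
      have := (dvd_neg.2 a2)
      convert this using 1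
      linear_combination H2
    · intro H
      apply polyG_eq_zero _ mβ nβ
      rw [polyG_add]
      have := dvd_add a2 H
      convert this using 1
      ring
  have i0 : (F (s, t, r)).1 + (F (s, t, r)).1 = 0 ↔ r4 (M * q) + r4 (M * q) = 0 := by
    constructor
    · intro H
      exact congrArg Prod.snd H
    · intro H
      exact Prod.ext (addself2 _) H
  change (F (s, t, r)).1 + (F (s, t, r)).1 = 0 ↔ t + t = 0
  rw [i0, i1, tors_ann β f g h hf hh hfac]
  constructor
  · intro H
    apply polyG_eq_zero g hg rfl
    have := dvd_sub H (dvd_mul_right g (2 * L (polyG r)))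
    rw [polyG_add]
    convert this using 1
    rw [hM]; ring
  · intro H
    have H2 := congrArg polyG H
    rw [polyG_add] at H2
    have z : polyG (0 : Fin g.natDegree → ZMod 4) = 0 := by simp [polyG]
    rw [z] at H2
    refine ⟨2 * L (polyG r), ?_⟩
    linear_combination H2 + 2 * hM

theorem kappa (α β : ℕ) (hα : 0 < α) (hβ : Odd β)
    (f g h : Polynomial (ZMod 4)) (hf : f.Monic) (hg : g.Monic) (hh : h.Monic)
    (hfac : f * h * g = X ^ β - 1)
    (b ℓ : Polynomial (ZMod 2)) (hb : b ∣ X ^ α - 1) :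
    Module.finrank (ZMod 2) (Submodule.span (ZMod 2)
        {w : Fin α → ZMod 2 | ∃ z : (Fin α → ZMod 2) × (Fin β → ZMod 4),
          memC b ℓ (f * h + 2 * f) z ∧ z + z = 0 ∧ z.1 = w}) =
      α - (EuclideanDomain.gcd (ℓ * red42 g) b).natDegree := by
  have := nt4
  have hβ0 : 0 < β := hβ.pos
  have mα : (X ^ α - 1 : Polynomial (ZMod 2)).Monic := XP_monic hα
  have mβ : (X ^ β - 1 : Polynomial (ZMod 4)).Monic := XP_monic hβ0
  have nα : (X ^ α - 1 : Polynomial (ZMod 2)).natDegree = α := XP_natDegree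
  have nβ : (X ^ β - 1 : Polynomial (ZMod 4)).natDegree = β := XP_natDegree
  have bez := EuclideanDomain.gcd_eq_gcd_ab (ℓ * red42 g) b
  have d1 := EuclideanDomain.gcd_dvd_left (ℓ * red42 g) b
  have d2 := EuclideanDomain.gcd_dvd_right (ℓ * red42 g) b
  set d := EuclideanDomain.gcd (ℓ * red42 g) b with hd
  obtain ⟨E, hE⟩ := d2.trans hb
  have hdE0 : d * E ≠ 0 := hE ▸ mα.ne_zero
  have md : d.Monic := zmod2_monic _ (left_ne_zero_of_mul hdE0)
  have mE : E.Monic := zmod2_monic _ (right_ne_zero_of_mul hdE0)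
  have nE : E.natDegree = α - d.natDegree := by
    have := natDegree_mul md.ne_zero mE.ne_zero
    rw [← hE, nα] at this; omega
  choose r2 hr2 using polyG_exists (X ^ α - 1 : Polynomial (ZMod 2)) mα nα
  let W : Submodule (ZMod 2) (Fin α → ZMod 2) :=
    { carrier := {w | d ∣ polyG w}
      add_mem' := by
        intro u v hu hv
        simp only [Set.mem_ofPred_eq] at *
        rw [polyG_add]; exact dvd_add hu hv
      zero_mem' := by simp [polyG]
      smul_mem' := by
        intro c u hu
        simp only [Set.mem_ofPred_eq] at *
        have : polyG (c • u) = C c * polyG u := by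
          simp [polyG, Finset.mul_sum, mul_assoc]
        rw [this]; exact Dvd.dvd.mul_left hu _ }
  have hW : {w : Fin α → ZMod 2 | ∃ z : (Fin α → ZMod 2) × (Fin β → ZMod 4),
          memC b ℓ (f * h + 2 * f) z ∧ z + z = 0 ∧ z.1 = w} = (W : Set (Fin α → ZMod 2)) := by
    ext w
    constructor
    · rintro ⟨⟨z1, z2⟩, ⟨lam, m, h1, h2⟩, hz, rfl⟩
      change _ ∣ polyG z1 - _ at h1
      change _ ∣ polyG z2 - _ at h2
      change d ∣ polyG z1
      have hz2 : z2 + z2 = 0 := congrArg Prod.snd hz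
      have H2 := congrArg polyG hz2
      rw [polyG_add] at H2
      have z : polyG (0 : Fin β → ZMod 4) = 0 := by simp [polyG]
      rw [z] at H2
      have h3 : (X ^ β - 1) ∣ 2 * (m * (f * h + 2 * f)) := by
        have := (dvd_neg.2 (Dvd.dvd.mul_left h2 2))
        convert this using 1
        linear_combination H2
      rw [tors_ann β f g h hf hh hfac] at h3
      obtain ⟨k, c, hk⟩ := two_dvd g m hg h3
      have hk2 : red42 m = red42 g * red42 k := by
        rw [hk, map_add, red42_two_mul, map_mul, add_zero]
      have h4 := (Dvd.intro E hE.symm).trans h1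
      have h5 : d ∣ red42 lam * b + red42 m * ℓ := by
        apply dvd_add (Dvd.dvd.mul_left d2 _)
        rw [hk2]
        convert Dvd.dvd.mul_left d1 (red42 k) using 1
        ring
      have := dvd_add h4 h5
      simpa using this
    · intro hw
      change d ∣ polyG w at hw
      obtain ⟨k, hk⟩ := hw
      obtain ⟨x, hx⟩ := red42_surj (EuclideanDomain.gcdB (ℓ * red42 g) b * k)
      obtain ⟨y, hy⟩ := red42_surj (EuclideanDomain.gcdA (ℓ * red42 g) b * k)
      obtain ⟨z2, hz2⟩ := polyG_exists (X ^ β - 1 : Polynomial (ZMod 4)) mβ nβ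
        (g * y * (f * h + 2 * f))
      refine ⟨(w, z2), ⟨x, g * y, ?_, hz2⟩, ?_, rfl⟩
      · change _ ∣ polyG w - _
        have : polyG w - (red42 x * b + red42 (g * y) * ℓ) = 0 := by
          rw [map_mul, hx, hy, hk]
          linear_combination k * bez
        rw [this]; exact dvd_zero _
      · apply Prod.ext
        · exact addself2 w
        · change z2 + z2 = 0
          apply polyG_eq_zero _ mβ nβ
          have H : (X ^ β - 1) ∣ 2 * (g * y * (f * h + 2 * f)) := by
            rw [tors_ann β f g h hf hh hfac]
            exact ⟨2 * y, by ring⟩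
          rw [polyG_add]
          have := dvd_add (Dvd.dvd.mul_left hz2 2) H
          convert this using 1
          ring
  rw [hW, Submodule.span_eq]
  let G : (Fin (α - d.natDegree) → ZMod 2) → W := fun s => ⟨r2 (d * polyG s), by
    change d ∣ polyG _
    have h4 := (Dvd.intro E hE.symm).trans (hr2 (d * polyG s))
    have := dvd_add h4 (dvd_mul_right d (polyG s))
    simpa using this⟩
  have hG : Function.Bijective G := by
    constructor
    · intro s s' hss
      have hF1 := congrArg (fun z => polyG z.1) hss
      simp only [G] at hF1
      apply polyG_inj E mE nE
      apply dvd_cancel md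
      rw [← hE]
      have a1 := hr2 (d * polyG s)
      rw [hF1] at a1
      have := dvd_sub (hr2 (d * polyG s')) a1
      convert this using 1; ring
    · rintro ⟨w, hw⟩
      obtain ⟨k, hk⟩ := id hw
      obtain ⟨s, hs⟩ := polyG_exists E mE nE k
      refine ⟨s, Subtype.ext ?_⟩
      apply polyG_inj _ mα nα
      have a3 : (X ^ α - 1) ∣ d * (polyG s - k) := by
        rw [hE]; exact mul_dvd_mul_left _ hs
      have := dvd_add (hr2 (d * polyG s)) a3
      convert this using 1
      simp only [G]
      linear_combination - hk
  have c1 := Nat.card_congr (Equiv.ofBijective G hG)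
  have c2 : Nat.card W = Nat.card (ZMod 2) ^ Module.finrank (ZMod 2) W :=
    Module.natCard_eq_pow_finrank
  rw [c2, Nat.card_fun] at c1
  simp only [Nat.card_eq_fintype_card, ZMod.card, Fintype.card_fin] at c1
  exact (Nat.pow_right_injective le_rfl c1).symm

/-- If `C = ⟨(b|0), (ℓ|fh+2f)⟩` is of type `(α,β;γ,δ;κ)` then
`γ = α - deg b + deg h`, `δ = deg g` and `κ = α - deg gcd(ℓg, b)`.
The type hypothesis says: `C` is additively equivalent to
`Z₂^γ × Z₄^δ`, and `κ` is the dimension of the binary projection of the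
order-two subcode `C_b`. -/
theorem type_from_degrees (α β γ δ κ : ℕ) (hα : 0 < α) (hβ : Odd β)
    (f g h : Polynomial (ZMod 4)) (hf : f.Monic) (hg : g.Monic) (hh : h.Monic)
    (hfac : f * h * g = X ^ β - 1)
    (b ℓ : Polynomial (ZMod 2)) (hb : b ∣ X ^ α - 1) (hℓ : ℓ.degree < b.degree)
    (hdvd : b ∣ red42 (h * g) * ℓ)
    (e : {z : (Fin α → ZMod 2) × (Fin β → ZMod 4) //
        memC b ℓ (f * h + 2 * f) z} ≃ (Fin γ → ZMod 2) × (Fin δ → ZMod 4))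
    (he : ∀ z w (hz : memC b ℓ (f * h + 2 * f) z)
        (hw : memC b ℓ (f * h + 2 * f) w)
        (hzw : memC b ℓ (f * h + 2 * f) (z + w)),
        e ⟨z + w, hzw⟩ = e ⟨z, hz⟩ + e ⟨w, hw⟩)
    (hκ : κ = Module.finrank (ZMod 2) (Submodule.span (ZMod 2)
        {w : Fin α → ZMod 2 | ∃ z : (Fin α → ZMod 2) × (Fin β → ZMod 4),
          memC b ℓ (f * h + 2 * f) z ∧ z + z = 0 ∧ z.1 = w})) :
    γ = α - b.natDegree + h.natDegree ∧ δ = g.natDegree ∧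
      κ = α - (EuclideanDomain.gcd (ℓ * red42 g) b).natDegree := by
  obtain ⟨Ψ, hΨ⟩ := param α β hα hβ f g h hf hg hh hfac b ℓ hb hdvd
  have m0 : memC b ℓ (f * h + 2 * f) (0 : (Fin α → ZMod 2) × (Fin β → ZMod 4)) :=
    ⟨0, 0, by simp [polyOf2], by simp [polyOf4]⟩
  have madd : ∀ z : (Fin α → ZMod 2) × (Fin β → ZMod 4), memC b ℓ (f * h + 2 * f) z →
      memC b ℓ (f * h + 2 * f) (z + z) := by
    rintro ⟨z1, z2⟩ ⟨lam, m, h1, h2⟩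
    change _ ∣ polyG z1 - _ at h1
    change _ ∣ polyG z2 - _ at h2
    refine ⟨lam + lam, m + m, ?_, ?_⟩
    · change _ ∣ polyG (z1 + z1) - _
      rw [polyG_add, map_add, map_add]
      convert dvd_add h1 h1 using 1
      ring
    · change _ ∣ polyG (z2 + z2) - _
      rw [polyG_add]
      convert dvd_add h2 h2 using 1
      ring
  have e0 : e ⟨0, m0⟩ = 0 := by
    have h00 : memC b ℓ (f * h + 2 * f) ((0 : (Fin α → ZMod 2) × (Fin β → ZMod 4)) + 0) := by
      simpa using m0
    have := he 0 0 m0 m0 h00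
    simp only [add_zero] at this
    exact left_eq_add.1 this
  have hT : ∀ x, (Ψ.trans e x) + (Ψ.trans e x) = 0 ↔ x.2.1 + x.2.1 = 0 := by
    intro x
    rw [← hΨ x]
    have h1 := he (Ψ x).1 (Ψ x).1 (Ψ x).2 (Ψ x).2 (madd _ (Ψ x).2)
    change e (Ψ x) + e (Ψ x) = 0 ↔ _
    have h2 : e (Ψ x) + e (Ψ x) = e ⟨(Ψ x).1 + (Ψ x).1, madd _ (Ψ x).2⟩ := h1.symm
    rw [h2, ← e0, e.apply_eq_iff_eq, Subtype.mk.injEq]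
  have c1 := Nat.card_congr (Ψ.trans e)
  have c2 : Nat.card {x : (Fin (α - b.natDegree) → ZMod 2) × (Fin g.natDegree → ZMod 4) ×
        (Fin h.natDegree → ZMod 2) // x.2.1 + x.2.1 = 0} =
      Nat.card {y : (Fin γ → ZMod 2) × (Fin δ → ZMod 4) // y.2 + y.2 = 0} :=
    Nat.card_congr ((Ψ.trans e).subtypeEquiv (fun x => by
      rw [← hT x, Prod.ext_iff]
      simp [addself2]))
  have e1 : {y : (Fin γ → ZMod 2) × (Fin δ → ZMod 4) // y.2 + y.2 = 0} ≃
      (Fin γ → ZMod 2) × {t : Fin δ → ZMod 4 // t + t = 0} :=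
    { toFun := fun y => (y.1.1, ⟨y.1.2, y.2⟩)
      invFun := fun y => ⟨(y.1, y.2.1), y.2.2⟩
      left_inv := fun _ => rfl
      right_inv := fun _ => rfl }
  have e2 : {x : (Fin (α - b.natDegree) → ZMod 2) × (Fin g.natDegree → ZMod 4) ×
        (Fin h.natDegree → ZMod 2) // x.2.1 + x.2.1 = 0} ≃
      (Fin (α - b.natDegree) → ZMod 2) × {t : Fin g.natDegree → ZMod 4 // t + t = 0} ×
        (Fin h.natDegree → ZMod 2) :=
    { toFun := fun y => (y.1.1, ⟨y.1.2.1, y.2⟩, y.1.2.2)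
      invFun := fun y => ⟨(y.1, y.2.1.1, y.2.2), y.2.1.2⟩
      left_inv := fun _ => rfl
      right_inv := fun _ => rfl }
  rw [Nat.card_congr e1, Nat.card_congr e2] at c2
  simp only [Nat.card_prod, card_tors4, Nat.card_fun, Nat.card_zmod,
    Nat.card_fin] at c1 c2
  have p4 : ∀ n : ℕ, 4 ^ n = (2 ^ 2) ^ n := fun n => rfl
  rw [p4, p4, ← pow_mul, ← pow_mul, ← pow_add, ← pow_add, ← pow_add] at c1
  rw [← pow_add, ← pow_add, ← pow_add] at c2
  have c1' := Nat.pow_right_injective le_rfl c1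
  have c2' := Nat.pow_right_injective le_rfl c2
  refine ⟨by omega, by omega, ?_⟩
  rw [hκ]
  exact kappa α β hα hβ f g h hf hg hh hfac b ℓ hb
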